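/- Let {X_k} be a Markov chain on a finite state space S with irreducible transition probability matrix P and stationary distribution π, started from π, and let f : S → [a,b]. Then for every ε > 0, Pr_π( | (1/n) Σ_{k=1}^n f(X_k) − E_π[f(X_1)] | ≥ ε ) ≤ 2 exp( −2 n ε² / ( (b−a)² HitT(P)² ) ). -/

import Mathlib

/-!
For `m` remaining states let `g m x` be the expected value of `f(X_1) + ⋯ + f(X_m)` for the chain
started at `X_1 = x`. They determine the increments of the Doob martingale of the sum: given the
previous state, the `k`-th increment is `g (n - k + 1)` evaluated at `X_k`, minus its mean.

The key estimate (`partialMean_sub_le`) is that `g m x - g m y ≤ (b - a) E_x[T_y]`: up to the time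
the chain started at `x` hits `y` it gains at most `b - a` per step over a chain started at `y`.
Hence each increment ranges over an interval of length at most `c = (b - a) HitT(P)`, Hoeffding's
lemma (`hoeffding_finite`) bounds the conditional moment generating function of each increment,
and multiplying along the path gives
`E_π[exp(θ (f(X_1) + ⋯ + f(X_n)))] ≤ exp(θ n E_π[f] + n θ² c² / 8)`
(`sum_pathProb_mul_exp_le`). Chernoff's bound with `θ = 4 ε / c²`, used for `f` and `-f`,
concludes.

As `hitExp` is `0` when the sum defining it is infinite, the estimate also needs the expected
hitting times to be finite (`summable_survive`). Stationarity gives this: if `s k` denotes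
`survive P y k`, then `π(s (k+1)) = π(s k) - π(y) (P (s k))(y)`, so that the numbers
`(P (s k))(y)` are summable because `π(y) > 0`. Summability then propagates from `y` to each state
along the positive-probability paths provided by irreducibility.
-/

open Finset

namespace MC

variable {S : Type*}

/-- `q` is a probability distribution on the finite state space `S`. -/
def IsProbVec [Fintype S] (q : S → ℝ) : Prop :=
  (∀ x, 0 ≤ q x) ∧ ∑ x, q x = 1

/-- `P` is a transition probability matrix (row-stochastic). -/
def IsStochastic [Fintype S] (P : S → S → ℝ) : Prop :=
  (∀ x y, 0 ≤ P x y) ∧ ∀ x, ∑ y, P x y = 1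

/-- `n`-step transition probabilities `Pⁿ(x,y)`. -/
def matPow [Fintype S] [DecidableEq S] (P : S → S → ℝ) : ℕ → S → S → ℝ
  | 0 => fun x y => if x = y then 1 else 0
  | n + 1 => fun x y => ∑ z, matPow P n x z * P z y

/-- `P` is irreducible: any state can reach any state. -/
def IsIrreducible [Fintype S] [DecidableEq S] (P : S → S → ℝ) : Prop :=
  ∀ x y, ∃ n, 1 ≤ n ∧ 0 < matPow P n x y

/-- `survive P y n x = Pr(T_y > n | X_1 = x)`, where
`T_y = inf {n ≥ 0 : X_{n+1} = y}` is the hitting time of `y`. -/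
def survive [Fintype S] [DecidableEq S] (P : S → S → ℝ) (y : S) : ℕ → S → ℝ
  | 0 => fun x => if x = y then 0 else 1
  | n + 1 => fun x => if x = y then 0 else ∑ z, P x z * survive P y n z

/-- The expected hitting time `E[T_y | X_1 = x] = ∑_{n ≥ 0} Pr(T_y > n | X_1 = x)`. -/
noncomputable def hitExp [Fintype S] [DecidableEq S] (P : S → S → ℝ) (x y : S) : ℝ :=
  (∑' n, ENNReal.ofReal (survive P y n x)).toReal

/-- The maximum expected hitting time `HitT(P) = max_{x,y} E[T_y | X_1 = x]`. -/
noncomputable def HitT [Fintype S] [DecidableEq S] (P : S → S → ℝ) : ℝ :=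
  ⨆ x, ⨆ y, hitExp P x y

/-- The probability of the cylinder set given by the path `ω = (X_1, …, X_{n+1})`
for the chain with initial distribution `q` and transition matrix `P`. -/
noncomputable def pathProb [Fintype S] (q : S → ℝ) (P : S → S → ℝ) {n : ℕ}
    (ω : Fin (n + 1) → S) : ℝ :=
  q (ω 0) * ∏ i : Fin n, P (ω i.castSucc) (ω i.succ)

/-- `Pr_q(A)` for an event `A` determined by the first `n+1` states `(X_1, …, X_{n+1})`. -/
noncomputable def chainProb [Fintype S] (q : S → ℝ) (P : S → S → ℝ) (n : ℕ)
    (A : Set (Fin (n + 1) → S)) : ℝ :=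
  ∑ ω : Fin (n + 1) → S, A.indicator (pathProb q P) ω

/-- `stepDist q P k` is the distribution of `X_{k+1}` when `X_1 ∼ q`. -/
def stepDist [Fintype S] (q : S → ℝ) (P : S → S → ℝ) : ℕ → S → ℝ
  | 0 => q
  | k + 1 => fun y => ∑ x, stepDist q P k x * P x y

end MC

namespace MC

open MeasureTheory ProbabilityTheory

/-! ### Hoeffding's lemma on a finite probability space -/

section Hoeffding

/-- Hoeffding's lemma for a random variable on a finite probability space, in terms of its
oscillation. -/
lemma hoeffding_finite {S : Type*} [Fintype S] (w : S → ℝ) (hw : IsProbVec w)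
    (g : S → ℝ) (c : ℝ) (hg : ∀ x y, g x - g y ≤ c) (θ : ℝ) :
    ∑ x, w x * Real.exp (θ * g x) ≤ Real.exp (θ * ∑ x, w x * g x + θ ^ 2 * c ^ 2 / 8) := by
  classical
  let _ : MeasurableSpace S := ⊤
  have hne : Nonempty S := by
    by_contra h
    rw [not_nonempty_iff] at h
    simpa using hw.2
  obtain ⟨x₀, hx₀⟩ := Finite.exists_min g
  let p : PMF S := PMF.ofFintype (fun x => ENNReal.ofReal (w x)) (by
    rw [← ENNReal.ofReal_sum_of_nonneg (fun x _ => hw.1 x), hw.2, ENNReal.ofReal_one])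
  have hint : ∀ F : S → ℝ, ∫ x, F x ∂p.toMeasure = ∑ x, w x * F x := by
    intro F
    rw [PMF.integral_eq_sum]
    refine Finset.sum_congr rfl fun x _ => ?_
    simp [p, ENNReal.toReal_ofReal (hw.1 x)]
  have h := hasSubgaussianMGF_of_mem_Icc (μ := p.toMeasure) (X := g) (a := g x₀) (b := g x₀ + c)
    (measurable_of_finite g).aemeasurable
    (Filter.Eventually.of_forall fun x => ⟨hx₀ x, by linarith [hg x x₀]⟩)
  have h2 := h.mgf_le θ
  rw [mgf, hint, hint] at h2
  have hc : ((((‖g x₀ + c - g x₀‖₊ / 2) ^ 2 : NNReal)) : ℝ) = c ^ 2 / 4 := by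
    push_cast
    rw [Real.norm_eq_abs, div_pow, sq_abs]
    ring
  rw [hc] at h2
  set M := ∑ x, w x * g x
  calc ∑ x, w x * Real.exp (θ * g x)
      = Real.exp (θ * M) * ∑ x, w x * Real.exp (θ * (g x - M)) := by
        rw [Finset.mul_sum]
        refine Finset.sum_congr rfl fun x _ => ?_
        rw [show θ * g x = θ * M + θ * (g x - M) by ring, Real.exp_add]
        ring
    _ ≤ Real.exp (θ * M) * Real.exp (c ^ 2 / 4 * θ ^ 2 / 2) := by gcongr
    _ = _ := by
        rw [← Real.exp_add]
        congr 1
        ring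

end Hoeffding

/-! ### Finiteness of expected hitting times -/

section Hitting

variable {S : Type*} [Fintype S] {P : S → S → ℝ} {π : S → ℝ}

lemma sum_stationary_mul_step (hstat : ∀ y, ∑ x, π x * P x y = π y) (h : S → ℝ) :
    ∑ x, π x * ∑ z, P x z * h z = ∑ z, π z * h z := by
  simp only [Finset.mul_sum]
  rw [Finset.sum_comm]
  refine Finset.sum_congr rfl fun z _ => ?_
  rw [← hstat z, Finset.sum_mul]
  exact Finset.sum_congr rfl fun x _ => by ring

variable [DecidableEq S]

lemma survive_nonneg (hP : IsStochastic P) (y : S) (n : ℕ) (x : S) : 0 ≤ survive P y n x := by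
  induction n generalizing x with
  | zero => simp only [survive]; split_ifs <;> norm_num
  | succ n ih =>
    simp only [survive]
    split_ifs
    · exact le_rfl
    · exact Finset.sum_nonneg fun z _ => mul_nonneg (hP.1 x z) (ih z)

lemma survive_self (y : S) (n : ℕ) : survive P y n y = 0 := by
  cases n <;> simp [survive]

lemma matPow_nonneg (hP : IsStochastic P) (n : ℕ) (x y : S) : 0 ≤ matPow P n x y := by
  induction n generalizing y with
  | zero => simp only [matPow]; split_ifs <;> norm_num
  | succ n ih => exact Finset.sum_nonneg fun z _ => mul_nonneg (ih z) (hP.1 z y)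

lemma sum_stationary_mul_matPow (hstat : ∀ y, ∑ x, π x * P x y = π y) (n : ℕ) (y : S) :
    ∑ x, π x * matPow P n x y = π y := by
  induction n generalizing y with
  | zero => simp [matPow]
  | succ n ih =>
    simp only [matPow, Finset.mul_sum]
    rw [Finset.sum_comm, ← hstat y]
    refine Finset.sum_congr rfl fun z _ => ?_
    rw [← ih z, Finset.sum_mul]
    exact Finset.sum_congr rfl fun x _ => by ring

lemma stationary_pos (hP : IsStochastic P) (hirr : IsIrreducible P) (hπ : IsProbVec π)
    (hstat : ∀ y, ∑ x, π x * P x y = π y) (y : S) : 0 < π y := by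
  obtain ⟨x, -, hx⟩ : ∃ x ∈ Finset.univ, 0 < π x := by
    apply Finset.exists_lt_of_sum_lt
    simp [hπ.2]
  obtain ⟨n, -, hn⟩ := hirr x y
  rw [← sum_stationary_mul_matPow hstat n y]
  exact (mul_pos hx hn).trans_le (Finset.single_le_sum (f := fun x => π x * matPow P n x y)
    (fun z _ => mul_nonneg (hπ.1 z) (matPow_nonneg hP n z y)) (Finset.mem_univ x))

/-- The expected return time to `y` is finite: under stationarity the probabilities of surviving
`k` steps telescope. -/
lemma summable_return (hP : IsStochastic P) (hirr : IsIrreducible P) (hπ : IsProbVec π)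
    (hstat : ∀ y, ∑ x, π x * P x y = π y) (y : S) :
    Summable fun k => ∑ z, P y z * survive P y k z := by
  have hy := stationary_pos hP hirr hπ hstat y
  have hstep : ∀ k, ∑ x, π x * survive P y (k + 1) x
      = ∑ x, π x * survive P y k x - π y * ∑ z, P y z * survive P y k z := by
    intro k
    rw [← sum_stationary_mul_step hstat (survive P y k), eq_sub_iff_add_eq,
      ← Finset.add_sum_erase _ _ (Finset.mem_univ y),
      ← Finset.add_sum_erase (a := y) _ (fun x => π x * ∑ z, P x z * survive P y k z)
        (Finset.mem_univ y), survive_self]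
    have : ∑ x ∈ Finset.univ.erase y, π x * survive P y (k + 1) x
        = ∑ x ∈ Finset.univ.erase y, π x * ∑ z, P x z * survive P y k z := by
      refine Finset.sum_congr rfl fun x hx => ?_
      simp [survive, Finset.ne_of_mem_erase hx]
    rw [this]
    ring
  have htel : ∀ m, π y * ∑ k ∈ Finset.range m, ∑ z, P y z * survive P y k z
      = ∑ x, π x * survive P y 0 x - ∑ x, π x * survive P y m x := by
    intro m
    induction m with
    | zero => simp
    | succ m ih =>
      rw [Finset.sum_range_succ, mul_add, ih, hstep m]
      ring
  refine summable_of_sum_range_le (c := (∑ x, π x * survive P y 0 x) / π y)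
    (fun k => Finset.sum_nonneg fun z _ => mul_nonneg (hP.1 y z) (survive_nonneg hP y k z))
    fun m => ?_
  rw [le_div_iff₀ hy, mul_comm, htel]
  have : 0 ≤ ∑ x, π x * survive P y m x :=
    Finset.sum_nonneg fun x _ => mul_nonneg (hπ.1 x) (survive_nonneg hP y m x)
  linarith

/-- Expected hitting times are finite at every state reachable from the target. -/
lemma summable_survive_of_reachable (hP : IsStochastic P) (hirr : IsIrreducible P)
    (hπ : IsProbVec π) (hstat : ∀ y, ∑ x, π x * P x y = π y) (y : S) (n : ℕ) (x : S)
    (hn : 0 < matPow P n y x) : Summable fun k => survive P y k x := by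
  induction n generalizing x with
  | zero =>
    have hxy : y = x := by
      by_contra h
      simp [matPow, h] at hn
    subst hxy
    simp [survive_self]
  | succ n ih =>
    obtain ⟨z, -, hz⟩ : ∃ z ∈ Finset.univ, 0 < matPow P n y z * P z x := by
      apply Finset.exists_lt_of_sum_lt
      simpa [matPow] using hn
    have hPz : 0 < P z x := pos_of_mul_pos_right hz (matPow_nonneg hP n y z)
    have hmz : 0 < matPow P n y z := pos_of_mul_pos_left hz hPz.le
    have hsum : Summable fun k => ∑ w, P z w * survive P y k w := by
      by_cases hzy : z = y
      · subst hzy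
        exact summable_return hP hirr hπ hstat z
      · have := (summable_nat_add_iff 1).mpr (ih z hmz)
        simpa [survive, hzy] using this
    have hmul : Summable fun k => P z x * survive P y k x :=
      Summable.of_nonneg_of_le
        (fun k => mul_nonneg hPz.le (survive_nonneg hP y k x))
        (fun k => Finset.single_le_sum (f := fun w => P z w * survive P y k w)
          (fun w _ => mul_nonneg (hP.1 z w) (survive_nonneg hP y k w)) (Finset.mem_univ x)) hsum
    exact (summable_mul_left_iff hPz.ne').mp hmul

lemma summable_survive (hP : IsStochastic P) (hirr : IsIrreducible P) (hπ : IsProbVec π)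
    (hstat : ∀ y, ∑ x, π x * P x y = π y) (y x : S) : Summable fun k => survive P y k x := by
  obtain ⟨n, -, hn⟩ := hirr y x
  exact summable_survive_of_reachable hP hirr hπ hstat y n x hn

/-- Finiteness ensures that `hitExp` is the true sum, and the maxima are over finite sets, so no
junk values occur in `HitT`. -/
lemma sum_survive_le_HitT (hP : IsStochastic P) (hirr : IsIrreducible P) (hπ : IsProbVec π)
    (hstat : ∀ y, ∑ x, π x * P x y = π y) (y x : S) (m : ℕ) :
    ∑ k ∈ Finset.range m, survive P y k x ≤ HitT P := by
  have hs := summable_survive hP hirr hπ hstat y x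
  have h0 := fun k => survive_nonneg hP y k x
  calc ∑ k ∈ Finset.range m, survive P y k x
      ≤ ∑' k, survive P y k x := hs.sum_le_tsum _ fun k _ => h0 k
    _ = hitExp P x y := by
        rw [hitExp, ← ENNReal.ofReal_tsum_of_nonneg h0 hs, ENNReal.toReal_ofReal (tsum_nonneg h0)]
    _ ≤ ⨆ y, hitExp P x y := le_ciSup (Set.finite_range _).bddAbove y
    _ ≤ HitT P := le_ciSup (f := fun x => ⨆ y, hitExp P x y) (Set.finite_range _).bddAbove x

end Hitting

/-! ### Partial sums along the chain -/

section PartialSums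

variable {S : Type*} [Fintype S] {P : S → S → ℝ} {π : S → ℝ} {f : S → ℝ} {a b : ℝ}

/-- `partialMean P f m x = E[f(X_1) + ⋯ + f(X_m) | X_1 = x]`. -/
def partialMean (P : S → S → ℝ) (f : S → ℝ) : ℕ → S → ℝ
  | 0 => fun _ => 0
  | m + 1 => fun x => f x + ∑ z, P x z * partialMean P f m z

/-- `partialMGF P f θ m x = E[exp(θ (f(X_1) + ⋯ + f(X_m))) | X_1 = x]`. -/
noncomputable def partialMGF (P : S → S → ℝ) (f : S → ℝ) (θ : ℝ) : ℕ → S → ℝ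
  | 0 => fun _ => 1
  | m + 1 => fun x => Real.exp (θ * f x) * ∑ z, P x z * partialMGF P f θ m z

lemma partialMean_add_le (hP : IsStochastic P) (hf : ∀ x, a ≤ f x) (m : ℕ) (x : S) :
    partialMean P f m x + a ≤ partialMean P f (m + 1) x := by
  induction m generalizing x with
  | zero => simpa [partialMean] using hf x
  | succ m ih =>
    have h : ∑ z, P x z * (partialMean P f m z + a) ≤ ∑ z, P x z * partialMean P f (m + 1) z :=
      Finset.sum_le_sum fun z _ => mul_le_mul_of_nonneg_left (ih z) (hP.1 x z)
    simp only [mul_add, Finset.sum_add_distrib, ← Finset.sum_mul, hP.2 x, one_mul] at h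
    rw [partialMean, partialMean]
    linarith

/-- Starting from `x` instead of `y` changes the expected partial sum by at most `b - a` per step
spent before hitting `y`. -/
lemma partialMean_sub_le [DecidableEq S] (hP : IsStochastic P)
    (hf : ∀ x, f x ∈ Set.Icc a b) (y : S) (m : ℕ) (x : S) :
    partialMean P f m x - partialMean P f m y
      ≤ (b - a) * ∑ k ∈ Finset.range m, survive P y k x := by
  induction m generalizing x with
  | zero => simp [partialMean]
  | succ m ih =>
    by_cases hxy : x = y
    · subst hxy
      simp [survive_self]
    · have h : ∑ z, P x z * partialMean P f m z
          ≤ ∑ z, P x z * (partialMean P f m y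
              + (b - a) * ∑ k ∈ Finset.range m, survive P y k z) :=
        Finset.sum_le_sum fun z _ =>
          mul_le_mul_of_nonneg_left (by linarith [ih z]) (hP.1 x z)
      have hs : ∑ z, P x z * ((b - a) * ∑ k ∈ Finset.range m, survive P y k z)
          = (b - a) * ∑ k ∈ Finset.range m, survive P y (k + 1) x := by
        simp only [survive, hxy, if_false, Finset.mul_sum]
        rw [Finset.sum_comm]
        exact Finset.sum_congr rfl fun k _ => Finset.sum_congr rfl fun z _ => by ring
      simp only [mul_add, Finset.sum_add_distrib] at h
      rw [hs, ← Finset.sum_mul, hP.2 x, one_mul] at h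
      have h1 := partialMean_add_le hP (fun x => (hf x).1) m y
      have h0 : survive P y 0 x = 1 := by simp [survive, hxy]
      have hx : partialMean P f (m + 1) x = f x + ∑ z, P x z * partialMean P f m z := rfl
      rw [Finset.sum_range_succ', h0, mul_add, hx]
      linarith [(hf x).2]

lemma sum_stationary_mul_partialMean (hstat : ∀ y, ∑ x, π x * P x y = π y) (m : ℕ) :
    ∑ x, π x * partialMean P f m x = m * ∑ x, π x * f x := by
  induction m with
  | zero => simp [partialMean]
  | succ m ih =>
    simp only [partialMean, mul_add, Finset.sum_add_distrib]
    rw [sum_stationary_mul_step hstat, ih]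
    push_cast
    ring

/-- Only `m` of the `m + 1` factors cost a Hoeffding term, since the first state is fixed. -/
lemma partialMGF_le (hP : IsStochastic P) {c : ℝ}
    (hc : ∀ m x y, partialMean P f m x - partialMean P f m y ≤ c) (θ : ℝ) (m : ℕ) (x : S) :
    partialMGF P f θ (m + 1) x
      ≤ Real.exp (θ * partialMean P f (m + 1) x + m * (θ ^ 2 * c ^ 2 / 8)) := by
  induction m generalizing x with
  | zero => simp [partialMGF, partialMean, hP.2 x]
  | succ m ih =>
    have hH := hoeffding_finite (P x) ⟨hP.1 x, hP.2 x⟩ (partialMean P f (m + 1)) c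
      (hc (m + 1)) θ
    calc partialMGF P f θ (m + 1 + 1) x
        = Real.exp (θ * f x) * ∑ z, P x z * partialMGF P f θ (m + 1) z := rfl
      _ ≤ Real.exp (θ * f x) * ∑ z, P x z *
            Real.exp (θ * partialMean P f (m + 1) z + m * (θ ^ 2 * c ^ 2 / 8)) := by
          gcongr with z
          · exact hP.1 x z
          · exact ih z
      _ = Real.exp (θ * f x + m * (θ ^ 2 * c ^ 2 / 8)) *
            ∑ z, P x z * Real.exp (θ * partialMean P f (m + 1) z) := by
          rw [Real.exp_add, mul_assoc, Finset.mul_sum (a := Real.exp (m * _))]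
          congr 1
          refine Finset.sum_congr rfl fun z _ => ?_
          rw [Real.exp_add]
          ring
      _ ≤ Real.exp (θ * f x + m * (θ ^ 2 * c ^ 2 / 8)) *
            Real.exp (θ * ∑ z, P x z * partialMean P f (m + 1) z + θ ^ 2 * c ^ 2 / 8) := by
          gcongr
      _ = _ := by
          rw [← Real.exp_add, show partialMean P f (m + 1 + 1) x
            = f x + ∑ z, P x z * partialMean P f (m + 1) z from rfl]
          congr 1
          push_cast
          ring

lemma pathProb_nonneg (hP : IsStochastic P) {q : S → ℝ} (hq : ∀ x, 0 ≤ q x) {n : ℕ}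
    (ω : Fin (n + 1) → S) : 0 ≤ pathProb q P ω :=
  mul_nonneg (hq _) (Finset.prod_nonneg fun _ _ => hP.1 _ _)

/-- First-step decomposition of the moment generating function along a path. -/
lemma sum_pathProb_mul_exp (q : S → ℝ) (θ : ℝ) (n : ℕ) :
    ∑ ω : Fin (n + 1) → S, pathProb q P ω * Real.exp (θ * ∑ k : Fin n, f (ω k.castSucc))
      = ∑ x, q x * partialMGF P f θ n x := by
  induction n generalizing q with
  | zero =>
    rw [← (Equiv.funUnique (Fin 1) S).symm.sum_comp]
    simp [pathProb, partialMGF]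
  | succ n ih =>
    rw [← (Fin.consEquiv fun _ : Fin (n + 2) => S).sum_comp, Fintype.sum_prod_type]
    refine Finset.sum_congr rfl fun x _ => ?_
    rw [show partialMGF P f θ (n + 1) x
      = Real.exp (θ * f x) * ∑ z, P x z * partialMGF P f θ n z from rfl, ← ih (P x), Finset.mul_sum, Finset.mul_sum]
    refine Finset.sum_congr rfl fun ω _ => ?_
    have h1 : pathProb q P (Fin.cons x ω : Fin (n + 2) → S) = q x * pathProb (P x) P ω := by
      simp [pathProb, Fin.prod_univ_succ]
    have h2 : ∑ k : Fin (n + 1), f ((Fin.cons x ω : Fin (n + 2) → S) k.castSucc)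
        = f x + ∑ k : Fin n, f (ω k.castSucc) := by
      simp [Fin.sum_univ_succ]
    change pathProb q P (Fin.cons x ω : Fin (n + 2) → S)
      * Real.exp (θ * ∑ k : Fin (n + 1), f ((Fin.cons x ω : Fin (n + 2) → S) k.castSucc)) = _
    rw [h1, h2, mul_add, Real.exp_add]
    ring

/-- Sub-Gaussian bound for the moment generating function of the sum along the stationary
chain. -/
lemma sum_pathProb_mul_exp_le (hP : IsStochastic P) (hπ : IsProbVec π)
    (hstat : ∀ y, ∑ x, π x * P x y = π y) {c : ℝ}
    (hc : ∀ m x y, partialMean P f m x - partialMean P f m y ≤ c) (θ : ℝ) (n : ℕ) (hn : n ≠ 0) :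
    ∑ ω : Fin (n + 1) → S, pathProb π P ω * Real.exp (θ * ∑ k : Fin n, f (ω k.castSucc))
      ≤ Real.exp (θ * (n * ∑ x, π x * f x) + n * (θ ^ 2 * c ^ 2 / 8)) := by
  obtain ⟨m, rfl⟩ := Nat.exists_eq_succ_of_ne_zero hn
  rw [sum_pathProb_mul_exp, ← sum_stationary_mul_partialMean hstat]
  calc ∑ x, π x * partialMGF P f θ (m + 1) x
      ≤ ∑ x, π x * Real.exp (θ * partialMean P f (m + 1) x + m * (θ ^ 2 * c ^ 2 / 8)) :=
        Finset.sum_le_sum fun x _ => mul_le_mul_of_nonneg_left (partialMGF_le hP hc θ m x) (hπ.1 x)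
    _ = Real.exp (m * (θ ^ 2 * c ^ 2 / 8)) *
          ∑ x, π x * Real.exp (θ * partialMean P f (m + 1) x) := by
        rw [Finset.mul_sum]
        refine Finset.sum_congr rfl fun x _ => ?_
        rw [Real.exp_add]
        ring
    _ ≤ Real.exp (m * (θ ^ 2 * c ^ 2 / 8)) *
          Real.exp (θ * ∑ x, π x * partialMean P f (m + 1) x + θ ^ 2 * c ^ 2 / 8) := by
        gcongr
        exact hoeffding_finite π hπ _ c (hc (m + 1)) θ
    _ = _ := by
        rw [← Real.exp_add]
        congr 1
        push_cast
        ring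

/-- Chernoff's bound for the upper tail. -/
lemma chainProb_upper_le (hP : IsStochastic P) (hπ : IsProbVec π)
    (hstat : ∀ y, ∑ x, π x * P x y = π y) {c : ℝ}
    (hc : ∀ m x y, partialMean P f m x - partialMean P f m y ≤ c) (n : ℕ) (hn : n ≠ 0)
    {ε : ℝ} (hε : 0 < ε) :
    chainProb π P n
      {ω | ε ≤ (1 / n : ℝ) * ∑ k : Fin n, f (ω k.castSucc) - ∑ x, π x * f x} ≤
      Real.exp (-(2 * n * ε ^ 2) / c ^ 2) := by
  set μ := ∑ x, π x * f x
  have hn0 : (0 : ℝ) < n := by exact_mod_cast Nat.pos_of_ne_zero hn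
  -- The Chernoff parameter; for `c = 0` it is `0` and the claimed bound is `1`.
  set θ := 4 * ε / c ^ 2 with hθ
  have hθ0 : 0 ≤ θ := by positivity
  calc chainProb π P n _
      ≤ ∑ ω : Fin (n + 1) → S, Real.exp (-(θ * (n * (μ + ε)))) *
          (pathProb π P ω * Real.exp (θ * ∑ k : Fin n, f (ω k.castSucc))) := by
        refine Finset.sum_le_sum fun ω _ => ?_
        refine Set.indicator_le' (f := pathProb π P)
          (g := fun ω => Real.exp (-(θ * (n * (μ + ε)))) *
            (pathProb π P ω * Real.exp (θ * ∑ k : Fin n, f (ω k.castSucc)))) ?_ ?_ ω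
        · intro ω hω
          have h0 := pathProb_nonneg hP hπ.1 ω
          have hsum : n * (μ + ε) ≤ ∑ k : Fin n, f (ω k.castSucc) := by
            have h : μ + ε ≤ (1 / n : ℝ) * ∑ k : Fin n, f (ω k.castSucc) := by
              have hω' : ε ≤ (1 / n : ℝ) * ∑ k : Fin n, f (ω k.castSucc) - μ := hω
              linarith
            rwa [one_div, inv_mul_eq_div, le_div_iff₀ hn0, mul_comm] at h
          have h1 : 1 ≤ Real.exp (-(θ * (n * (μ + ε)))
              + θ * ∑ k : Fin n, f (ω k.castSucc)) := by
            rw [Real.one_le_exp_iff]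
            linarith [mul_le_mul_of_nonneg_left hsum hθ0]
          rw [Real.exp_add] at h1
          calc pathProb π P ω = pathProb π P ω * 1 := (mul_one _).symm
            _ ≤ _ := mul_le_mul_of_nonneg_left h1 h0
            _ = _ := by ring
        · intro ω _
          have h0 := pathProb_nonneg hP hπ.1 ω
          positivity
    _ ≤ Real.exp (-(θ * (n * (μ + ε)))) *
          Real.exp (θ * (n * μ) + n * (θ ^ 2 * c ^ 2 / 8)) := by
        rw [← Finset.mul_sum]
        gcongr
        exact sum_pathProb_mul_exp_le hP hπ hstat hc θ n hn
    _ = _ := by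
        rw [← Real.exp_add]
        congr 1
        by_cases h : c = 0
        · simp [hθ, h]
        · rw [hθ]
          field_simp
          ring

lemma chainProb_zero_le_one (hP : IsStochastic P) (hπ : IsProbVec π) (A : Set (Fin 1 → S)) :
    chainProb π P 0 A ≤ 1 := by
  have h := sum_pathProb_mul_exp (P := P) (f := fun _ => 0) π 0 0
  simp only [partialMGF, zero_mul, Real.exp_zero, mul_one, hπ.2] at h
  rw [← h]
  exact Finset.sum_le_sum fun ω _ =>
    Set.indicator_le_self' (fun ω _ => pathProb_nonneg hP hπ.1 ω) ω

lemma chainProb_le_add (hP : IsStochastic P) (hπ : IsProbVec π) {n : ℕ}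
    {A B C : Set (Fin (n + 1) → S)} (h : A ⊆ B ∪ C) :
    chainProb π P n A ≤ chainProb π P n B + chainProb π P n C := by
  classical
  rw [chainProb, chainProb, chainProb, ← Finset.sum_add_distrib]
  refine Finset.sum_le_sum fun ω _ => ?_
  have h0 := pathProb_nonneg hP hπ.1 ω
  have hω := @h ω
  by_cases hA : ω ∈ A <;> by_cases hB : ω ∈ B <;> by_cases hC : ω ∈ C <;>
    simp_all

end PartialSums

end MC

open MC in
/-- **Nonasymptotic weak law of large numbers for irreducible chains** (Corollary 1,
first part). For a stationary chain (initialized at the stationary distribution `π`)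
with irreducible `P` on finite `S`, and `f : S → [a,b]`, for every `ε > 0`,
`Pr_π(|(1/n) ∑_{k=1}^n f(X_k) − E_π[f(X_1)]| ≥ ε) ≤ 2 exp(−2nε²/((b−a)²HitT(P)²))`. -/
theorem markov_lln_hoeffding {S : Type*} [Fintype S] [DecidableEq S]
    (P : S → S → ℝ) (hP : IsStochastic P) (hirr : IsIrreducible P)
    (π : S → ℝ) (hπ : IsProbVec π) (hstat : ∀ y, ∑ x, π x * P x y = π y)
    (f : S → ℝ) (a b : ℝ) (hf : ∀ x, f x ∈ Set.Icc a b)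
    (n : ℕ) (ε : ℝ) (hε : 0 < ε) :
    chainProb π P n
      {ω | ε ≤ |(1 / n : ℝ) * ∑ k : Fin n, f (ω k.castSucc) - ∑ x, π x * f x|} ≤
      2 * Real.exp (-(2 * n * ε ^ 2) / ((b - a) ^ 2 * HitT P ^ 2)) := by
  have hosc : ∀ (g : S → ℝ) (a b : ℝ), (∀ x, g x ∈ Set.Icc a b) → ∀ m x y,
      partialMean P g m x - partialMean P g m y ≤ (b - a) * HitT P := by
    intro g a b hg m x y
    have hab : 0 ≤ b - a := sub_nonneg.mpr ((hg x).1.trans (hg x).2)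
    exact (partialMean_sub_le hP hg y m x).trans
      (mul_le_mul_of_nonneg_left (sum_survive_le_HitT hP hirr hπ hstat y x m) hab)
  rcases eq_or_ne n 0 with rfl | hn
  · have h := chainProb_zero_le_one hP hπ
      {ω | ε ≤ |(1 / (0 : ℕ) : ℝ) * ∑ k : Fin 0, f (ω k.castSucc) - ∑ x, π x * f x|}
    refine h.trans ?_
    norm_num
  · have hup := chainProb_upper_le hP hπ hstat (hosc f a b hf) n hn hε
    have hlo := chainProb_upper_le hP hπ hstat (f := fun x => -f x)
      (hosc (fun x => -f x) (-b) (-a)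
        fun x => ⟨neg_le_neg (hf x).2, neg_le_neg (hf x).1⟩) n hn hε
    rw [mul_pow] at hup hlo
    rw [show -a - -b = b - a by ring] at hlo
    rw [two_mul (Real.exp _)]
    refine (chainProb_le_add hP hπ fun ω hω => ?_).trans (add_le_add hup hlo)
    have hω' : ε ≤ |(1 / n : ℝ) * ∑ k : Fin n, f (ω k.castSucc) - ∑ x, π x * f x| := hω
    rcases le_abs.mp hω' with h | h
    · exact Or.inl h
    · refine Or.inr ?_
      simp only [Set.mem_ofPred_eq, Finset.sum_neg_distrib, mul_neg]
      linarith
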